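/- Let X = {x ∈ ℝ : x ≤ -1 or x ≥ 1} = ℝ \ (-1, 1) with the metric inherited from ℝ. Then X admits no Lipschitz co-mixer: there is no constant L ≥ 0 and map τ : X × X × X → X that is L-Lipschitz in each variable separately and satisfies τ(a,a,b) = τ(a,b,a) = τ(b,a,a) = b for all a, b ∈ X. -/

import Mathlib

/-! For fixed first arguments `-1, 1`, continuity in the third argument keeps `τ (-1) 1 t` on one side
of the gap for all `t ≥ 1`; since `τ (-1) 1 1 = -1`, it is the negative side. But `τ 1 1 t = t`, and
moving the first argument from `1` to `-1` changes the value by at most `2 * L`, so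
`τ (-1) 1 t ≥ t - 2 * L`, which is positive for large `t`. -/

open scoped NNReal

/-- The set `X = ℝ \ (-1, 1) = {x : x ≤ -1 or 1 ≤ x}` with the metric inherited from `ℝ`
admits no Lipschitz co-mixer. -/
theorem real_complement_interval_no_lipschitz_comixer :
    ¬ ∃ (L : ℝ≥0) (τ : {x : ℝ // x ≤ -1 ∨ 1 ≤ x} → {x : ℝ // x ≤ -1 ∨ 1 ≤ x} →
          {x : ℝ // x ≤ -1 ∨ 1 ≤ x} → {x : ℝ // x ≤ -1 ∨ 1 ≤ x}),
        (∀ b c, LipschitzWith L fun a => τ a b c) ∧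
        (∀ a c, LipschitzWith L fun b => τ a b c) ∧
        (∀ a b, LipschitzWith L fun c => τ a b c) ∧
        (∀ a b, τ a a b = b) ∧ (∀ a b, τ a b a = b) ∧ (∀ a b, τ b a a = b) := by
  rintro ⟨L, τ, h1, -, h3, e1, -, e3⟩
  let p : {x : ℝ // x ≤ -1 ∨ 1 ≤ x} := ⟨1, Or.inr le_rfl⟩
  let m : {x : ℝ // x ≤ -1 ∨ 1 ≤ x} := ⟨-1, Or.inl le_rfl⟩
  -- The ray `[1, ∞)` is parametrized by all of `ℝ` through `max 1`.
  let r : ℝ → {x : ℝ // x ≤ -1 ∨ 1 ≤ x} := fun t => ⟨max 1 t, Or.inr (le_max_left _ _)⟩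
  have hr : Continuous r := (continuous_const.max continuous_id).subtype_mk _
  have hg : Continuous fun t => (τ m p (r t) : ℝ) :=
    continuous_subtype_val.comp ((h3 m p).continuous.comp hr)
  have hL : (0 : ℝ) ≤ L := L.2
  have g1 : (τ m p (r 1) : ℝ) = -1 := by
    have : r 1 = p := Subtype.ext (max_self 1)
    rw [this, e3]
  have g2 : (1 : ℝ) ≤ τ m p (r (2 * L + 1)) := by
    have h := (h1 p (r (2 * L + 1))).dist_le_mul m p
    simp only [e1] at h
    have hb : (r (2 * L + 1) : ℝ) = 2 * L + 1 := max_eq_right (by linarith)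
    have hd : dist m p = 2 := by
      rw [Subtype.dist_eq, Real.dist_eq]
      norm_num [m, p]
    rw [hd, Subtype.dist_eq, Real.dist_eq, hb] at h
    have := (abs_le.1 h).1
    linarith
  obtain ⟨t, -, ht⟩ := intermediate_value_Icc (by linarith : (1 : ℝ) ≤ 2 * L + 1) hg.continuousOn
    (show (0 : ℝ) ∈ _ from ⟨by simp only [g1]; norm_num, by linarith⟩)
  have ht' : (τ m p (r t) : ℝ) = 0 := ht
  rcases (τ m p (r t)).2 with h | h <;> linarith
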